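/- arXiv:2509.15973 — 3 statements merged into one kernel-verified Lean document; each statement's English description precedes it below -/
import Mathlib

section
/- With the quadratic model m and surrogate m̃_τ̃ as defined, suppose τ̃ > 0, τ̃·B ≤ A (i.e. A/τ̃ − B ≥ 0), and A + C ≤ 0. Then for every α ∈ [0,1] the majorization m̃_τ̃(x + α•z) ≥ m(x + α•z) holds. -/
open scoped RealInnerProductSpace

/-- First case of Lemma 2: if `τ̃ B ≤ A` and `A + C ≤ 0`, then the isotropic
surrogate `m̃_τ̃` majorizes the quadratic model `m` along `x + α • z` for
`α ∈ [0,1]`, where `A = ‖z‖²`, `B = ⟪H z, z⟫`, `C = ⟪g, z⟫`. -/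
theorem majorization_first_case
    {E : Type*} [NormedAddCommGroup E] [InnerProductSpace ℝ E]
    (x g z : E) (H : E →L[ℝ] E)
    (hH : ∀ u v : E, ⟪H u, v⟫ = ⟪u, H v⟫)
    (q0 τt : ℝ) (hτt : 0 < τt)
    (hB : τt * ⟪H z, z⟫ ≤ ‖z‖ ^ 2)
    (hC : ‖z‖ ^ 2 + ⟪g, z⟫ ≤ 0) :
    ∀ α ∈ Set.Icc (0 : ℝ) 1,
      q0 + ⟪g, (x + α • z) - x⟫ +
          (1 / 2) * ⟪H ((x + α • z) - x), (x + α • z) - x⟫ ≤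
        q0 - ⟪z, (x + α • z) - x⟫ + ‖(x + α • z) - x‖ ^ 2 / (2 * τt) := by
  rintro α ⟨hα, -⟩
  have hdiv : ⟪H z, z⟫ ≤ ‖z‖ ^ 2 / τt := by
    rw [le_div_iff₀ hτt]
    linarith
  have hsq : ‖α • z‖ ^ 2 = α ^ 2 * ‖z‖ ^ 2 := by
    rw [norm_smul, mul_pow, Real.norm_eq_abs, sq_abs]
  have hfrac : α ^ 2 * ‖z‖ ^ 2 / (2 * τt) = α ^ 2 / 2 * (‖z‖ ^ 2 / τt) := by
    field_simp
  rw [add_sub_cancel_left, hsq, hfrac, map_smul]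
  simp only [real_inner_smul_left, real_inner_smul_right, real_inner_self_eq_norm_sq]
  -- The gap is `-α (A + C) + (α² / 2) (A / τ̃ - B)`, a sum of two nonnegative terms.
  have h1 := mul_nonneg hα (neg_nonneg.mpr hC)
  have h2 := mul_nonneg (by positivity : 0 ≤ α ^ 2 / 2) (sub_nonneg.mpr hdiv)
  linarith
end

section
/- With the quadratic model m and surrogate m̃_τ̃ as defined, let g ≠ 0, suppose ⟨H g, g⟩ ≥ ‖g‖² (in particular ⟨H g, g⟩ > 0), set the Cauchy step τ_c = ‖g‖²/⟨H g, g⟩, take z = −τ_c•g, and let 0 < τ̃ ≤ τ_c. Then the hypotheses of the majorization lemma hold, namely A + C ≤ 0 and τ̃·B ≤ A, and consequently m̃_τ̃(x + α•z) ≥ m(x + α•z) for all α ∈ [0,1]. -/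
/-!
Write `A = ‖z‖²`, `B = ⟪H z, z⟫`, `C = ⟪g, z⟫`, `G = ‖g‖²` and `K = ⟪H g, g⟫`. Since `τc * K = G`,
one has `A + C = τc * (τc - 1) * G`, which is nonpositive because `G ≤ K` forces `τc ≤ 1`, and
`A - τt * B = τc ^ 2 * (G - τt * K)`, which is nonnegative because `τt ≤ τc`. Along `x + α • z`
the gap between the surrogate and the model is
`-α * (A + C) + α ^ 2 / (2 * τt) * (A - τt * B)`, a sum of two nonnegative terms for every `α ≥ 0`
(`majorization_along_ray`).
-/

open scoped RealInnerProductSpace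

/-- With `A`, `B`, `C` as above, `A + C ≤ 0` and `τ B ≤ A` make the isotropic surrogate dominate the
quadratic model along the whole ray `x + α • z`, `α ≥ 0`. -/
theorem majorization_along_ray
    {E : Type*} [NormedAddCommGroup E] [InnerProductSpace ℝ E]
    (x g z : E) (H : E →L[ℝ] E) (q0 τ α : ℝ) (hτ : 0 < τ) (hα : 0 ≤ α)
    (hAC : ‖z‖ ^ 2 + ⟪g, z⟫ ≤ 0) (hBA : τ * ⟪H z, z⟫ ≤ ‖z‖ ^ 2) :
    q0 + ⟪g, (x + α • z) - x⟫ +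
        (1 / 2) * ⟪H ((x + α • z) - x), (x + α • z) - x⟫ ≤
      q0 - ⟪z, (x + α • z) - x⟫ + ‖(x + α • z) - x‖ ^ 2 / (2 * τ) := by
  have hlin : 0 ≤ -α * (‖z‖ ^ 2 + ⟪g, z⟫) :=
    mul_nonneg_of_nonpos_of_nonpos (neg_nonpos.mpr hα) hAC
  have hquad : 0 ≤ α ^ 2 / (2 * τ) * (‖z‖ ^ 2 - τ * ⟪H z, z⟫) :=
    mul_nonneg (by positivity) (sub_nonneg.mpr hBA)
  have hgap : α ^ 2 / (2 * τ) * (‖z‖ ^ 2 - τ * ⟪H z, z⟫) =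
      (α * ‖z‖) ^ 2 / (2 * τ) - 1 / 2 * (α * (α * ⟪H z, z⟫)) := by
    field_simp
  simp only [add_sub_cancel_left, map_smul, real_inner_smul_left, real_inner_smul_right,
    real_inner_self_eq_norm_sq, norm_smul, Real.norm_of_nonneg hα]
  linarith

/-- Worst-case certificate for the direction-selection step (Line 3 of the PCG
algorithm): with `z = -τ_c • g` the scaled negative-gradient direction
(`τ_c = ‖g‖²/⟪H g, g⟫` the Cauchy step), if `⟪H g, g⟫ ≥ ‖g‖²` and
`0 < τ̃ ≤ τ_c`, then the hypotheses of the majorization lemma hold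
(`A + C ≤ 0` and `τ̃ B ≤ A`), and the surrogate `m̃_τ̃` majorizes the model `m`
along `x + α • z` for all `α ∈ [0,1]`. -/
theorem scaled_gradient_passes_majorization
    {E : Type*} [NormedAddCommGroup E] [InnerProductSpace ℝ E]
    (x g z : E) (H : E →L[ℝ] E)
    (hH : ∀ u v : E, ⟪H u, v⟫ = ⟪u, H v⟫)
    (q0 : ℝ) (hg : g ≠ 0) (hHg : ‖g‖ ^ 2 ≤ ⟪H g, g⟫)
    (τc τt : ℝ) (hτc : τc = ‖g‖ ^ 2 / ⟪H g, g⟫)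
    (hz : z = -τc • g) (hτt0 : 0 < τt) (hτt : τt ≤ τc) :
    (‖z‖ ^ 2 + ⟪g, z⟫ ≤ 0) ∧ (τt * ⟪H z, z⟫ ≤ ‖z‖ ^ 2) ∧
    ∀ α ∈ Set.Icc (0 : ℝ) 1,
      q0 + ⟪g, (x + α • z) - x⟫ +
          (1 / 2) * ⟪H ((x + α • z) - x), (x + α • z) - x⟫ ≤
        q0 - ⟪z, (x + α • z) - x⟫ + ‖(x + α • z) - x‖ ^ 2 / (2 * τt) := by
  have hG : 0 < ‖g‖ ^ 2 := by positivity
  have hK : 0 < ⟪H g, g⟫ := hG.trans_le hHg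
  have hτc_pos : 0 < τc := hτt0.trans_le hτt
  have hτc_le : τc ≤ 1 := hτc ▸ (div_le_one hK).mpr hHg
  have hτcK : τc * ⟪H g, g⟫ = ‖g‖ ^ 2 := by rw [hτc, div_mul_cancel₀ _ hK.ne']
  have hA : ‖z‖ ^ 2 = τc ^ 2 * ‖g‖ ^ 2 := by
    rw [hz, norm_smul, mul_pow, norm_neg, Real.norm_eq_abs, sq_abs]
  have hB : ⟪H z, z⟫ = τc ^ 2 * ⟪H g, g⟫ := by
    rw [hz, map_smul, real_inner_smul_left, real_inner_smul_right]
    ring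
  have hC : ⟪g, z⟫ = -τc * ‖g‖ ^ 2 := by
    rw [hz, real_inner_smul_right, real_inner_self_eq_norm_sq]
  have hAC : ‖z‖ ^ 2 + ⟪g, z⟫ ≤ 0 := by
    rw [hA, hC]
    nlinarith [mul_nonneg (mul_nonneg hτc_pos.le (sub_nonneg.mpr hτc_le)) hG.le]
  have hBA : τt * ⟪H z, z⟫ ≤ ‖z‖ ^ 2 := by
    calc τt * ⟪H z, z⟫ ≤ τc * ⟪H z, z⟫ := by
          rw [hB]
          gcongr
      _ = ‖z‖ ^ 2 := by
          rw [hA, hB, ← hτcK]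
          ring
  exact ⟨hAC, hBA, fun α hα => majorization_along_ray x g z H q0 τt α hτt0 hα.1 hAC hBA⟩
end

section
/- Let E be a real inner product space, let h : E → ℝ be convex, let g ∈ E, τ > 0, and x* ∈ E. Then x* minimizes the function y ↦ h(y) + ‖y − (x* − τ•g)‖²/(2τ) over E if and only if for every y ∈ E one has h(y) ≥ h(x*) + ⟨−g, y − x*⟩. -/
open scoped RealInnerProductSpace

/-!
Expanding the square, the constant `τ / 2 * ‖g‖ ^ 2` cancels, and `x` minimizes the proximal objective
iff `h x ≤ h y + ⟪g, y - x⟫ + ‖y - x‖ ^ 2 / (2 * τ)` for all `y`. The subgradient inequality is this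
bound without the nonnegative quadratic term, so it implies it. Conversely, applying the bound at
`x + t • (y - x)` and using convexity gives `h x - h y - ⟪g, y - x⟫ ≤ t * (‖y - x‖ ^ 2 / (2 * τ))`
for all `t ∈ (0, 1]`: the quadratic term is of second order in `t` and disappears as `t → 0`.
-/

lemma prox_objective_expand {E : Type*} [NormedAddCommGroup E] [InnerProductSpace ℝ E]
    (g : E) (τ : ℝ) (hτ : 0 < τ) (x y : E) :
    ‖y - (x - τ • g)‖ ^ 2 / (2 * τ) =
      ‖y - x‖ ^ 2 / (2 * τ) + ⟪g, y - x⟫ + τ / 2 * ‖g‖ ^ 2 := by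
  have e : y - (x - τ • g) = (y - x) + τ • g := by abel
  rw [e, norm_add_sq_real, norm_smul, inner_smul_right, real_inner_comm, Real.norm_eq_abs,
    mul_pow, sq_abs]
  field_simp

/-- Criticality certificate for the proximal gradient mapping: for convex `h`,
`x*` is a fixed point of `x ↦ prox_{τh}(x - τ g)` (i.e. minimizes
`y ↦ h y + ‖y - (x* - τ • g)‖²/(2τ)`) iff `-g` is a subgradient of `h` at
`x*`, i.e. `0 ∈ ∇q(x*) + ∂h(x*)`. -/
theorem prox_fixed_point_iff_subgradient
    {E : Type*} [NormedAddCommGroup E] [InnerProductSpace ℝ E]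
    (h : E → ℝ) (hconv : ConvexOn ℝ Set.univ h)
    (g : E) (τ : ℝ) (hτ : 0 < τ) (xstar : E) :
    (∀ y : E, h xstar + ‖xstar - (xstar - τ • g)‖ ^ 2 / (2 * τ) ≤
        h y + ‖y - (xstar - τ • g)‖ ^ 2 / (2 * τ)) ↔
    (∀ y : E, h xstar + ⟪-g, y - xstar⟫ ≤ h y) := by
  simp only [prox_objective_expand g τ hτ, sub_self, inner_zero_right, norm_zero,
    zero_pow two_ne_zero, zero_div, inner_neg_left]
  constructor
  · intro H y
    by_contra! hlt
    set C := ‖y - xstar‖ ^ 2 / (2 * τ) with hC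
    have hC0 : 0 ≤ C := by positivity
    set A := h xstar - h y - ⟪g, y - xstar⟫ with hA
    have hA0 : 0 < A := by linarith
    -- Any `t ∈ (0, 1]` with `t * C < A` yields a contradiction.
    obtain ⟨t, ht0, ht1, htC⟩ : ∃ t : ℝ, 0 < t ∧ t ≤ 1 ∧ t * C < A := by
      refine ⟨A / (A + C), by positivity, ?_, ?_⟩
      · rw [div_le_one (by positivity)]
        linarith
      · rw [div_mul_eq_mul_div, div_lt_iff₀ (by positivity)]
        nlinarith
    have hcv := hconv.2 (Set.mem_univ xstar) (Set.mem_univ y) (sub_nonneg.2 ht1) ht0.le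
      (sub_add_cancel 1 t)
    have hd : (1 - t) • xstar + t • y - xstar = t • (y - xstar) := by module
    have hq : ‖t • (y - xstar)‖ ^ 2 / (2 * τ) = t ^ 2 * C := by
      rw [norm_smul, mul_pow, Real.norm_eq_abs, sq_abs, mul_div_assoc]
    have hm := H ((1 - t) • xstar + t • y)
    rw [hd, hq, inner_smul_right] at hm
    simp only [smul_eq_mul] at hcv
    have hle : t * A ≤ t * (t * C) := by
      rw [hA]
      linarith
    exact absurd (le_of_mul_le_mul_left hle ht0) htC.not_ge
  · intro H y
    have hy := H y
    have hq : 0 ≤ ‖y - xstar‖ ^ 2 / (2 * τ) := by positivity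
    linarith
end
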